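/- arXiv:1310.1365 — 7 statements merged into one kernel-verified Lean document; each statement's English description precedes it below -/
import Mathlib

section
/- Let a < b be real numbers and let n ≥ 1. Let f₁, …, fₙ : ℝ → ℝ be smooth functions whose restrictions to [a,b] are linearly independent (i.e., if c₁, …, cₙ ∈ ℝ and the function Σᵢ cᵢ·fᵢ vanishes identically on [a,b], then all cᵢ = 0). Then for any real numbers λ₁, …, λₙ there exists a smooth function α : ℝ → ℝ such that ∫ₐᵇ α(v)·fᵢ(v) dv = λᵢ for every i = 1, …, n. -/
open MeasureTheory

/-!
The function `α` can be sought in the span of the `f j`: for `α = ∑ j, c j * f j` the moments are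
`G c`, where `G` is the Gram matrix of the `f j` in `L²([a,b])`. If `G c = 0`, then
`∫ (∑ j, c j * f j)² = c · G c = 0`, so by continuity the combination vanishes on `[a,b]` and
`c = 0` by independence. Hence `G` is injective, and so surjective in finite dimension.
-/

/-- **Moment-prescription lemma** (Lemma 3.4 of the paper). If `f₁, …, fₙ : ℝ → ℝ` are smooth
functions whose restrictions to `[a,b]` are linearly independent, then any prescribed values
`λ₁, …, λₙ` can be realized as the moments `∫ₐᵇ α·fᵢ` of a single smooth function `α`. -/
theorem moment_prescription_smooth (a b : ℝ) (hab : a < b) (n : ℕ) (hn : 1 ≤ n)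
    (f : Fin n → ℝ → ℝ) (hf : ∀ i, ContDiff ℝ (⊤ : ℕ∞) (f i))
    (hindep : ∀ c : Fin n → ℝ,
      (∀ x ∈ Set.Icc a b, (∑ i, c i * f i x) = 0) → ∀ i, c i = 0)
    (lam : Fin n → ℝ) :
    ∃ α : ℝ → ℝ, ContDiff ℝ (⊤ : ℕ∞) α ∧ ∀ i, (∫ v in a..b, α v * f i v) = lam i := by
  set G : Matrix (Fin n) (Fin n) ℝ := fun i j => ∫ v in a..b, f j v * f i v with hG
  have hcont : ∀ i, Continuous (f i) := fun i => (hf i).continuous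
  have hmom : ∀ (c : Fin n → ℝ) (i : Fin n),
      (∫ v in a..b, (∑ j, c j * f j v) * f i v) = G.mulVecLin c i := by
    intro c i
    simp only [Finset.sum_mul]
    rw [intervalIntegral.integral_finsetSum]
    · refine Finset.sum_congr rfl fun j _ => ?_
      change _ = (∫ v in a..b, f j v * f i v) * c j
      rw [← intervalIntegral.integral_mul_const]
      exact intervalIntegral.integral_congr fun v _ => by ring
    · intro j _
      exact ((continuous_const.mul (hcont j)).mul (hcont i)).intervalIntegrable _ _
  have hsq : ∀ c : Fin n → ℝ,
      (∫ v in a..b, (∑ j, c j * f j v) ^ 2) = ∑ i, c i * G.mulVecLin c i := by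
    intro c
    simp only [← hmom, ← intervalIntegral.integral_const_mul]
    rw [← intervalIntegral.integral_finsetSum]
    · refine intervalIntegral.integral_congr fun v _ => ?_
      rw [sq, Finset.mul_sum]
      exact Finset.sum_congr rfl fun i _ => by ring
    · intro i _
      exact Continuous.intervalIntegrable (by fun_prop) _ _
  have hinj : Function.Injective G.mulVecLin := by
    rw [injective_iff_map_eq_zero]
    intro c hc
    funext i
    refine hindep c (fun x hx => ?_) i
    by_contra hne
    have hpos : 0 < ∫ v in a..b, (∑ j, c j * f j v) ^ 2 :=
      intervalIntegral.integral_pos hab (Continuous.continuousOn (by fun_prop))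
        (fun v _ => sq_nonneg _) ⟨x, hx, by positivity⟩
    rw [hsq, hc] at hpos
    simp at hpos
  obtain ⟨c, hc⟩ := LinearMap.injective_iff_surjective.mp hinj lam
  refine ⟨fun v => ∑ j, c j * f j v, ?_, fun i => ?_⟩
  · exact ContDiff.sum fun j _ => contDiff_const.mul (hf j)
  · rw [hmom, hc]
end

section
/- Let a < b be real numbers and let n ≥ 1. Let f₁, …, fₙ : ℝ → ℝ be continuous functions whose restrictions to [a,b] are linearly independent (i.e., if c₁, …, cₙ ∈ ℝ and the function Σᵢ cᵢ·fᵢ vanishes identically on [a,b], then all cᵢ = 0). Then for any real numbers λ₁, …, λₙ there exists a smooth function α : ℝ → ℝ whose support is contained in the open interval (a,b) (in particular α vanishes to infinite order at a and at b) such that ∫ₐᵇ α(v)·fᵢ(v) dv = λᵢ for every i = 1, …, n. -/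
/-!
The moment vectors `(∫ₐᵇ α·fᵢ)ᵢ` of smooth functions `α` supported in `(a,b)` form a linear
subspace of `ℝⁿ` (`attainableMoments`). If it were proper, some nonzero linear form
`v ↦ ∑ cᵢ vᵢ` would vanish on it, so that `∑ cᵢ fᵢ` would integrate to zero against every test
function on `(a,b)`. By the fundamental lemma of the calculus of variations and continuity,
`∑ cᵢ fᵢ` would then vanish on `[a,b]`, forcing `c = 0` by linear independence.
-/

open MeasureTheory

/-- The subspace of `ℝⁿ` consisting of all moment vectors `(∫ₐᵇ α·fᵢ)ᵢ`, where `α` ranges over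
the smooth functions supported in `(a,b)`. -/
def attainableMoments (a b : ℝ) {n : ℕ} (f : Fin n → ℝ → ℝ) (hf : ∀ i, Continuous (f i)) :
    Submodule ℝ (Fin n → ℝ) where
  carrier := {m | ∃ α : ℝ → ℝ, ContDiff ℝ (⊤ : ℕ∞) α ∧ Function.support α ⊆ Set.Ioo a b ∧
      ∀ i, (∫ v in a..b, α v * f i v) = m i}
  zero_mem' := ⟨fun _ => 0, contDiff_const, by simp, by simp⟩
  add_mem' := by
    rintro m m' ⟨α, hα, hαs, hαm⟩ ⟨β, hβ, hβs, hβm⟩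
    refine ⟨fun v => α v + β v, hα.add hβ,
      (Function.support_add α β).trans (Set.union_subset hαs hβs), fun i => ?_⟩
    simp only [add_mul, Pi.add_apply]
    rw [← hαm, ← hβm]
    exact intervalIntegral.integral_add ((hα.continuous.mul (hf i)).intervalIntegrable _ _)
      ((hβ.continuous.mul (hf i)).intervalIntegrable _ _)
  smul_mem' := by
    rintro r m ⟨α, hα, hαs, hαm⟩
    refine ⟨fun v => r * α v, contDiff_const.mul hα,
      (Function.support_const_smul_subset r α).trans hαs, fun i => ?_⟩
    simp only [mul_assoc, intervalIntegral.integral_const_mul, hαm, Pi.smul_apply, smul_eq_mul]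

/-- The fundamental lemma of the calculus of variations for continuous functions: test functions
supported in `(a,b)` detect a continuous function on the whole closed interval `[a,b]`. -/
lemma eqOn_zero_of_integral_test_eq_zero {a b : ℝ} (hab : a < b) {F : ℝ → ℝ} (hF : Continuous F)
    (h : ∀ g : ℝ → ℝ, ContDiff ℝ (⊤ : ℕ∞) g → Function.support g ⊆ Set.Ioo a b →
      (∫ v in a..b, g v * F v) = 0) :
    ∀ x ∈ Set.Icc a b, F x = 0 := by
  have hae : ∀ᵐ x, x ∈ Set.Ioo a b → F x = 0 := by
    refine isOpen_Ioo.ae_eq_zero_of_integral_contDiff_smul_eq_zero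
      (hF.locallyIntegrable.locallyIntegrableOn _) fun g hg _ hgs => ?_
    have hsupp : Function.support g ⊆ Set.Ioo a b := (subset_tsupport g).trans hgs
    rw [← h g hg hsupp]
    refine (intervalIntegral.integral_eq_integral_of_support_subset ?_).symm
    exact (Function.support_mul_subset_left g F).trans (hsupp.trans Set.Ioo_subset_Ioc_self)
  have hae' : F =ᵐ[volume.restrict (Set.Icc a b)] fun _ => 0 := by
    rw [← restrict_Ioo_eq_restrict_Icc]
    exact (ae_restrict_iff' measurableSet_Ioo).2 hae
  exact Measure.eqOn_Icc_of_ae_eq volume hab.ne hae' hF.continuousOn continuousOn_const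

/-- Compactly supported strengthening of the moment-prescription lemma (Lemma 3.4 of the paper):
the moments `∫ₐᵇ α·fᵢ` of continuous functions `f₁, …, fₙ` that are linearly independent on
`[a,b]` can be prescribed arbitrarily using a smooth function `α` supported in the open
interval `(a,b)` (in particular `α` vanishes to infinite order at `a` and at `b`). -/
theorem moment_prescription_compact_support (a b : ℝ) (hab : a < b) (n : ℕ) (hn : 1 ≤ n)
    (f : Fin n → ℝ → ℝ) (hf : ∀ i, Continuous (f i))
    (hindep : ∀ c : Fin n → ℝ,
      (∀ x ∈ Set.Icc a b, (∑ i, c i * f i x) = 0) → ∀ i, c i = 0)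
    (lam : Fin n → ℝ) :
    ∃ α : ℝ → ℝ, ContDiff ℝ (⊤ : ℕ∞) α ∧ Function.support α ⊆ Set.Ioo a b ∧
      ∀ i, (∫ v in a..b, α v * f i v) = lam i := by
  by_contra hlam
  obtain ⟨φ, hφ, hφp⟩ := Submodule.exists_dual_map_eq_bot_of_notMem
    (p := attainableMoments a b f hf) (x := lam) hlam inferInstance
  have hφ_apply : ∀ v, φ v = ∑ i, v i * φ (Pi.single i 1) := fun v => by
    have hsingle : ∀ i : Fin n, (fun j => if i = j then (1 : ℝ) else 0) = Pi.single i 1 :=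
      fun i => by ext j; simp [Pi.single_apply, eq_comm]
    simpa [hsingle] using LinearMap.pi_apply_eq_sum_univ φ v
  have hc : ∀ i, φ (Pi.single i 1) = 0 := by
    refine hindep _ (eqOn_zero_of_integral_test_eq_zero hab (by fun_prop) fun g hg hgs => ?_)
    have hmem : (fun i => ∫ v in a..b, g v * f i v) ∈ attainableMoments a b f hf :=
      ⟨g, hg, hgs, fun _ => rfl⟩
    have hzero := LinearMap.le_ker_iff_map.2 hφp hmem
    rw [LinearMap.mem_ker, hφ_apply] at hzero
    rw [← hzero]
    simp only [Finset.mul_sum, ← intervalIntegral.integral_mul_const]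
    have hgc := hg.continuous
    rw [intervalIntegral.integral_finsetSum fun i _ =>
      Continuous.intervalIntegrable (by fun_prop) _ _]
    refine Finset.sum_congr rfl fun i _ => ?_
    congr 1
    ext v
    ring
  exact hφ (by simp [hφ_apply lam, hc])
end

section
/- Let a < b be real numbers and n ≥ 1. Let G₁, …, Gₙ : ℝ × 𝕊² → ℝ be smooth functions such that for every v ∈ [a,b] the functions G₁(v,·), …, Gₙ(v,·) : 𝕊² → ℝ are linearly independent. Let ρ : 𝕊² → ℝ be smooth. Then the following are equivalent: (i) there exists a smooth function F : ℝ × 𝕊² → ℝ with F(v,·) = 0 for every v outside the open interval (a,b) (so F vanishes to infinite order at {a,b} × 𝕊²), such that ∫ₐᵇ F(v,ω) dv = ρ(ω) for every ω ∈ 𝕊², and ∫_{𝕊²} F(v,ω)·Gᵢ(v,ω) dμ(ω) = 0 for every v ∈ [a,b] and every i = 1, …, n; (ii) for every function g : 𝕊² → ℝ which, for every v ∈ [a,b], lies in the real linear span of {G₁(v,·), …, Gₙ(v,·)}, one has ∫_{𝕊²} ρ·g dμ = 0. -/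
/-!
Necessity of the orthogonality condition is Fubini's theorem. For sufficiency, let `P(v)` be the
`L²(𝕊²)`-orthogonal projection onto the span of `G₁(v,·), …, Gₙ(v,·)`, let `η` be a smooth function
positive on `(a,b)` and zero elsewhere, and look for `F(v,·) = η(v) (1 - P(v)) h` with a single
unknown `h : 𝕊² → ℝ`. Such an `F` is orthogonal to all `Gᵢ(v,·)`, and the condition on its integral
reads `c h - K h = ρ` with `c = ∫ η > 0` and `K = ∫ₐᵇ η(v) P(v) dv`.

The operator `K` is self-adjoint and compact, being a norm limit of finite-rank operators. If
`(c - K) h = 0` then `∫ η(v) ‖(1 - P(v)) h‖² dv = 0`, so `h` lies in the intersection `W` of all the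
spans. By the Fredholm alternative `c - K` maps onto the orthogonal complement of `W`, which contains
`ρ` by hypothesis (`exists_averaged_projection_preimage`).

Regularity is automatic. The Gram matrix of the `Gᵢ(v,·)` is smooth in `v` and invertible on
`[a,b]`, so `K h = ∫ Σᵢ βᵢ(v) Gᵢ(v,·) dv` with smooth coefficients `βᵢ`; hence `K h` is smooth and so
is `h = (ρ + K h) / c`. Smoothness of these parametric integrals is obtained by extending functions
on `ℝ × 𝕊²` to `ℝ × ℝ³` (`exists_contDiff_extension`) and differentiating under the integral sign
(`contDiff_weighted_integral`).
-/

open MeasureTheory Metric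
open scoped Manifold

noncomputable section

instance : Fact (Module.finrank ℝ (EuclideanSpace ℝ (Fin 3)) = 2 + 1) :=
  ⟨finrank_euclideanSpace_fin⟩

/-- The unit sphere `𝕊² = {x ∈ ℝ³ : |x| = 1}` with its standard smooth manifold structure. -/
abbrev Sphere2 : Type := Metric.sphere (0 : EuclideanSpace ℝ (Fin 3)) 1

/-- The rotation-invariant surface measure `μ` on `𝕊²`. -/
abbrev sphereMeasure : Measure Sphere2 :=
  (volume : Measure (EuclideanSpace ℝ (Fin 3))).toSphere

/-! ### Smoothness of parametric integrals -/

lemma hasFDerivAt_weighted_integral {E E' F Ω : Type}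
    [NormedAddCommGroup E] [NormedSpace ℝ E] [FiniteDimensional ℝ E]
    [NormedAddCommGroup E'] [NormedSpace ℝ E'] [NormedAddCommGroup F] [NormedSpace ℝ F]
    [MeasurableSpace Ω] {ν : Measure Ω} {K : Set E'} (hK : IsCompact K) {y : Ω → E'}
    (hy : AEStronglyMeasurable y ν) (hyK : ∀ᵐ ω ∂ν, y ω ∈ K) {w : Ω → ℝ} (hw : Integrable w ν)
    {f : E × E' → F} (hf : ContDiff ℝ (⊤ : ℕ∞) f) (x : E) :
    HasFDerivAt (fun x => ∫ ω, w ω • f (x, y ω) ∂ν)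
      (∫ ω, w ω • (fderiv ℝ f (x, y ω)).comp (ContinuousLinearMap.inl ℝ E E') ∂ν) x := by
  have : ProperSpace E := FiniteDimensional.proper_real E
  have hD : Continuous fun p : E × E' =>
      (fderiv ℝ f p).comp (ContinuousLinearMap.inl ℝ E E') :=
    (hf.continuous_fderiv (by simp)).clm_comp continuous_const
  have hm : ∀ (x : E) {F' : Type} [NormedAddCommGroup F'] [NormedSpace ℝ F']
      {k : E × E' → F'}, Continuous k →
      AEStronglyMeasurable (fun ω => w ω • k (x, y ω)) ν := by
    intro x F' _ _ k hk
    exact hw.aestronglyMeasurable.smul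
      ((hk.comp (Continuous.prodMk_right x)).comp_aestronglyMeasurable hy)
  obtain ⟨C, hC⟩ := ((isCompact_closedBall x 1).prod hK).exists_bound_of_continuousOn
    hD.continuousOn
  obtain ⟨C', hC'⟩ := ((isCompact_closedBall x 1).prod hK).exists_bound_of_continuousOn
    hf.continuous.continuousOn
  refine hasFDerivAt_integral_of_dominated_of_fderiv_le (s := closedBall x 1)
    (bound := fun ω => ‖w ω‖ * C)
    (F' := fun x ω => w ω • (fderiv ℝ f (x, y ω)).comp (ContinuousLinearMap.inl ℝ E E'))
    (closedBall_mem_nhds x one_pos)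
    (Filter.Eventually.of_forall fun x => hm x hf.continuous) ?_ (hm x hD) ?_
    (hw.norm.mul_const C) ?_
  · refine (hw.norm.mul_const C').mono' (hm x hf.continuous) ?_
    filter_upwards [hyK] with ω hω
    rw [norm_smul]
    gcongr
    exact hC' _ ⟨mem_closedBall_self zero_le_one, hω⟩
  · filter_upwards [hyK] with ω hω x' hx'
    rw [norm_smul]
    gcongr
    exact hC _ ⟨hx', hω⟩
  · refine Filter.Eventually.of_forall fun ω x' _ => ?_
    have h1 : HasFDerivAt f (fderiv ℝ f (x', y ω)) (x', y ω) :=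
      (hf.differentiable (by simp) _).hasFDerivAt
    exact (h1.comp x' (hasFDerivAt_prodMk_left x' (y ω))).const_smul (w ω)

/-- Differentiation under the integral sign, to all orders: the derivative in the parameter is an
integral of the same form, with the partial derivative of `f` in place of `f`. -/
lemma contDiff_weighted_integral {E E' F Ω : Type}
    [NormedAddCommGroup E] [NormedSpace ℝ E] [FiniteDimensional ℝ E]
    [NormedAddCommGroup E'] [NormedSpace ℝ E'] [NormedAddCommGroup F] [NormedSpace ℝ F]
    [MeasurableSpace Ω] {ν : Measure Ω} {K : Set E'} (hK : IsCompact K) {y : Ω → E'}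
    (hy : AEStronglyMeasurable y ν) (hyK : ∀ᵐ ω ∂ν, y ω ∈ K) {w : Ω → ℝ} (hw : Integrable w ν)
    {f : E × E' → F} (hf : ContDiff ℝ (⊤ : ℕ∞) f) :
    ContDiff ℝ (⊤ : ℕ∞) (fun x => ∫ ω, w ω • f (x, y ω) ∂ν) := by
  rw [contDiff_infty]
  intro m
  induction m generalizing F with
  | zero =>
    refine contDiff_zero.2 (continuous_iff_continuousAt.2 fun x => ?_)
    exact (hasFDerivAt_weighted_integral hK hy hyK hw hf x).continuousAt
  | succ m ih =>
    refine contDiff_succ_iff_hasFDerivAt.2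
      ⟨_, ih (f := fun p => (fderiv ℝ f p).comp (ContinuousLinearMap.inl ℝ E E')) ?_,
        fun x => hasFDerivAt_weighted_integral hK hy hyK hw hf x⟩
    exact ContDiff.clm_comp (hf.fderiv_right (by simp)) contDiff_const

/-- The radial retraction `x ↦ x / |x|` onto the sphere, with an arbitrary value at `0`. -/
def radialRetraction (x : EuclideanSpace ℝ (Fin 3)) : Sphere2 :=
  if h : x = 0 then ⟨EuclideanSpace.single 0 1, by simp⟩
  else ⟨‖x‖⁻¹ • x, by simp [norm_smul, h]⟩

lemma radialRetraction_coe (ω : Sphere2) : radialRetraction ω = ω := by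
  have h : (ω : EuclideanSpace ℝ (Fin 3)) ≠ 0 := by
    intro h
    have := norm_eq_of_mem_sphere ω
    simp [h] at this
  rw [radialRetraction, dif_neg h]
  ext1
  simp

lemma contMDiffAt_radialRetraction {x : EuclideanSpace ℝ (Fin 3)} (hx : x ≠ 0) :
    ContMDiffAt 𝓘(ℝ, EuclideanSpace ℝ (Fin 3)) (𝓡 2) (⊤ : ℕ∞) radialRetraction x := by
  let U : TopologicalSpace.Opens (EuclideanSpace ℝ (Fin 3)) := ⟨{0}ᶜ, isOpen_compl_singleton⟩
  have key : ContMDiff 𝓘(ℝ, EuclideanSpace ℝ (Fin 3)) 𝓘(ℝ, EuclideanSpace ℝ (Fin 3)) (⊤ : ℕ∞)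
      (fun u : U => ‖(u : EuclideanSpace ℝ (Fin 3))‖⁻¹ • (u : EuclideanSpace ℝ (Fin 3))) := by
    intro u
    have hu : (u : EuclideanSpace ℝ (Fin 3)) ≠ 0 := u.2
    refine (contMDiffAt_subtype_iff (U := U)
      (f := fun z : EuclideanSpace ℝ (Fin 3) => ‖z‖⁻¹ • z)).2 (ContDiffAt.contMDiffAt ?_)
    exact ((contDiffAt_norm ℝ hu).inv (by simpa using hu)).smul contDiffAt_id
  have hmem : ∀ u : U, ‖(u : EuclideanSpace ℝ (Fin 3))‖⁻¹ • (u : EuclideanSpace ℝ (Fin 3)) ∈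
      sphere (0 : EuclideanSpace ℝ (Fin 3)) 1 := by
    intro u
    have hu : (u : EuclideanSpace ℝ (Fin 3)) ≠ 0 := u.2
    simp [norm_smul, hu]
  have h2 := key.codRestrict_sphere (n := 2) hmem
  refine (contMDiffAt_subtype_iff (U := U) (x := ⟨x, hx⟩)).1 ?_
  refine (h2 ⟨x, hx⟩).congr_of_eventuallyEq (Filter.Eventually.of_forall fun u => ?_)
  have hu : (u : EuclideanSpace ℝ (Fin 3)) ≠ 0 := u.2
  simp only [radialRetraction, dif_neg hu]
  rfl

/-- Every smooth function on `ℝ × 𝕊²` is the restriction of a smooth function on `ℝ × ℝ³`: extend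
it radially constantly and cut off near `0`. This reduces smoothness of parametric integrals to
calculus in vector spaces. -/
lemma exists_contDiff_extension {G : ℝ × Sphere2 → ℝ}
    (hG : ContMDiff ((𝓘(ℝ, ℝ)).prod (𝓡 2)) 𝓘(ℝ, ℝ) (⊤ : ℕ∞) G) :
    ∃ f : ℝ × EuclideanSpace ℝ (Fin 3) → ℝ, ContDiff ℝ (⊤ : ℕ∞) f ∧
      ∀ v (ω : Sphere2), f (v, ω) = G (v, ω) := by
  refine ⟨fun p => Real.smoothTransition (2 * ‖p.2‖ ^ 2 - 1) * G (p.1, radialRetraction p.2),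
    ?_, ?_⟩
  · rw [contDiff_iff_contDiffAt]
    rintro ⟨v, x⟩
    by_cases hx : x = 0
    · have : (fun p : ℝ × EuclideanSpace ℝ (Fin 3) =>
          Real.smoothTransition (2 * ‖p.2‖ ^ 2 - 1) * G (p.1, radialRetraction p.2))
          =ᶠ[nhds (v, x)] fun _ => 0 := by
        have hc : ContinuousAt (fun p : ℝ × EuclideanSpace ℝ (Fin 3) =>
          2 * ‖p.2‖ ^ 2 - 1) (v, x) := by fun_prop
        have : ∀ᶠ p in nhds (v, x), 2 * ‖p.2‖ ^ 2 - 1 < (0 : ℝ) :=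
          hc.eventually_lt continuousAt_const (by simp [hx])
        filter_upwards [this] with p hp
        rw [Real.smoothTransition.zero_of_nonpos hp.le, zero_mul]
      exact contDiffAt_const.congr_of_eventuallyEq this
    · refine ContDiffAt.mul ?_ ?_
      · refine ContDiff.contDiffAt ?_
        refine Real.smoothTransition.contDiff.comp ?_
        exact (contDiff_const.mul (contDiff_snd.norm_sq ℝ)).sub contDiff_const
      · rw [← contMDiffAt_iff_contDiffAt]
        refine ContMDiffAt.comp (v, x) (hG _) (ContMDiffAt.prodMk ?_ ?_)
        · exact contDiffAt_fst.contMDiffAt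
        · exact ContMDiffAt.comp (v, x) (contMDiffAt_radialRetraction hx)
            contDiffAt_snd.contMDiffAt
  · intro v ω
    have : ‖(ω : EuclideanSpace ℝ (Fin 3))‖ = 1 := norm_eq_of_mem_sphere ω
    have h1 : Real.smoothTransition (2 * 1 ^ 2 - 1) = 1 :=
      Real.smoothTransition.one_of_one_le (by norm_num)
    simp only [radialRetraction_coe, this, h1, one_mul]

lemma contDiff_integral_sphere {G : ℝ × Sphere2 → ℝ}
    (hG : ContMDiff ((𝓘(ℝ, ℝ)).prod (𝓡 2)) 𝓘(ℝ, ℝ) (⊤ : ℕ∞) G) {w : Sphere2 → ℝ}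
    (hw : Continuous w) :
    ContDiff ℝ (⊤ : ℕ∞) fun v => ∫ ω, G (v, ω) * w ω ∂sphereMeasure := by
  obtain ⟨f, hf, hfG⟩ := exists_contDiff_extension hG
  have := contDiff_weighted_integral (ν := sphereMeasure) (w := w)
    (isCompact_sphere (0 : EuclideanSpace ℝ (Fin 3)) 1)
    continuous_subtype_val.aestronglyMeasurable
    (Filter.Eventually.of_forall fun ω => ω.2)
    (hw.integrable_of_hasCompactSupport (HasCompactSupport.of_compactSpace _)) hf
  simpa [hfG, mul_comm] using this

lemma contMDiff_integral_interval {a b : ℝ} (hab : a ≤ b) {G : ℝ × Sphere2 → ℝ}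
    (hG : ContMDiff ((𝓘(ℝ, ℝ)).prod (𝓡 2)) 𝓘(ℝ, ℝ) (⊤ : ℕ∞) G) :
    ContMDiff (𝓡 2) 𝓘(ℝ, ℝ) (⊤ : ℕ∞) fun ω => ∫ v in a..b, G (v, ω) := by
  obtain ⟨f, hf, hfG⟩ := exists_contDiff_extension hG
  have := contDiff_weighted_integral (ν := volume.restrict (Set.Ioc a b)) (w := fun _ => 1)
    (y := id) (isCompact_Icc (a := a) (b := b)) aestronglyMeasurable_id
    ((ae_restrict_mem measurableSet_Ioc).mono fun v hv => Set.Ioc_subset_Icc_self hv)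
    (integrable_const _) (hf.comp (contDiff_snd.prodMk contDiff_fst))
  have h2 := this.contMDiff.comp (contMDiff_coe_sphere (n := 2) (E := EuclideanSpace ℝ (Fin 3)))
  refine h2.congr fun ω => ?_
  simp [intervalIntegral.integral_of_le hab, hfG]

/-! ### The averaged projection in a Hilbert space -/

lemma isCompactOperator_starProjection {H : Type*} [NormedAddCommGroup H] [InnerProductSpace ℝ H]
    (V : Submodule ℝ H) [FiniteDimensional ℝ V] : IsCompactOperator V.starProjection := by
  have h : IsCompactOperator (id : V → V) := (isCompactOperator_id_iff_finiteDimensional (𝕜 := ℝ)).2 ‹_›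
  exact (h.comp_clm V.orthogonalProjectionOnto).clm_comp V.subtypeL

lemma inner_self_sub_inner_starProjection {H : Type*} [NormedAddCommGroup H] [InnerProductSpace ℝ H]
    (V : Submodule ℝ H) [V.HasOrthogonalProjection] (x : H) :
    inner ℝ x x - inner ℝ x (V.starProjection x) = ‖x - V.starProjection x‖ ^ 2 := by
  have h : inner ℝ (V.starProjection x) (x - V.starProjection x) = 0 := by
    rw [real_inner_comm]
    exact V.starProjection_inner_eq_zero x _ (V.starProjection_apply_mem x)
  rw [← real_inner_self_eq_norm_sq, inner_sub_left x, h, sub_zero, inner_sub_right]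

/-- The range of the averaged complementary projection `∫ η(v) (1 - P(v)) dv`, with `P(v)` the
orthogonal projections onto a continuous family of finite-dimensional subspaces `V v`, contains
`(⋂ V v)ᗮ`. The operator is a scalar `c > 0` minus a compact one, and adding `c` times the
projection onto `⋂ V v` makes it injective, hence surjective by the Fredholm alternative. -/
lemma exists_averaged_projection_preimage {H : Type*} [NormedAddCommGroup H]
    [InnerProductSpace ℝ H] [CompleteSpace H] {a b : ℝ} (hab : a < b) (V : ℝ → Submodule ℝ H)
    [∀ v, FiniteDimensional ℝ (V v)]
    (hV : ContinuousOn (fun v => (V v).starProjection) (Set.Icc a b))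
    {η : ℝ → ℝ} (hη : Continuous η) (hpos : ∀ v ∈ Set.Ioo a b, 0 < η v) (ρ : H)
    (hρ : ∀ w, (∀ v ∈ Set.Icc a b, w ∈ V v) → inner ℝ w ρ = 0) :
    ∃ h : H, (∫ v in a..b, η v) • h = ρ + ∫ v in a..b, η v • (V v).starProjection h := by
  set c := ∫ v in a..b, η v with hc
  have hcpos : 0 < c := intervalIntegral.intervalIntegral_pos_of_pos_on
    (hη.intervalIntegrable _ _) hpos hab
  have hηnn : ∀ v ∈ Set.Icc a b, 0 ≤ η v := by
    have hcl : IsClosed {v | 0 ≤ η v} := isClosed_le continuous_const hη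
    have : closure (Set.Ioo a b) ⊆ {v | 0 ≤ η v} :=
      closure_minimal (fun v hv => (hpos v hv).le) hcl
    rwa [closure_Ioo hab.ne] at this
  have hN : ContinuousOn (fun v => η v • (V v).starProjection) (Set.Icc a b) :=
    hη.continuousOn.smul hV
  have hNi : IntervalIntegrable (fun v => η v • (V v).starProjection) volume a b :=
    ContinuousOn.intervalIntegrable_of_Icc hab.le hN
  set K : H →L[ℝ] H := ∫ v in a..b, η v • (V v).starProjection with hK
  have hKapp : ∀ x, K x = ∫ v in a..b, η v • (V v).starProjection x := fun x => by
    rw [hK, ContinuousLinearMap.intervalIntegral_apply hNi]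
    rfl
  have hVx : ∀ x, ContinuousOn (fun v => (V v).starProjection x) (Set.Icc a b) := fun x =>
    hV.clm_apply continuousOn_const
  have hKin : ∀ x y, inner ℝ x (K y) = ∫ v in a..b, η v * inner ℝ x ((V v).starProjection y) := by
    intro x y
    have hi : IntervalIntegrable (fun v => η v • (V v).starProjection y) volume a b :=
      ContinuousOn.intervalIntegrable_of_Icc hab.le (hη.continuousOn.smul (hVx y))
    have := (innerSL ℝ x).intervalIntegral_comp_comm hi
    rw [hKapp]
    simpa [inner_smul_right] using this.symm
  have hKc : IsCompactOperator K := by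
    have hmem : K ∈ compactOperator (RingHom.id ℝ) H H := by
      rw [hK, intervalIntegral.integral_of_le hab.le]
      have hav := Convex.set_average_mem (μ := volume) (t := Set.Ioc a b)
        (f := fun v => η v • (V v).starProjection)
        (compactOperator (RingHom.id ℝ) H H).convex
        (isClosed_setOfPred_isCompactOperator) (by simp [hab]) (by simp)
        (Filter.Eventually.of_forall fun v =>
          (compactOperator (RingHom.id ℝ) H H).smul_mem (η v)
            (isCompactOperator_starProjection (V v)))
        ((intervalIntegrable_iff_integrableOn_Ioc_of_le hab.le).1 hNi)
      rw [setAverage_eq] at hav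
      have h2 := (compactOperator (RingHom.id ℝ) H H).smul_mem
        (volume.real (Set.Ioc a b)) hav
      rwa [smul_smul, mul_inv_cancel₀ (by simp [Measure.real, hab.le, (sub_pos.2 hab).ne']), one_smul] at h2
    exact hmem
  let W : Submodule ℝ H := ⨅ v ∈ Set.Icc a b, V v
  have hW : ∀ w, w ∈ W ↔ ∀ v ∈ Set.Icc a b, w ∈ V v := fun w => by simp [W]
  have hWle : W ≤ V a := fun w hw => (hW w).1 hw a ⟨le_rfl, hab.le⟩
  have : FiniteDimensional ℝ W := Submodule.finiteDimensional_of_le hWle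
  -- the range of `c - K` is orthogonal to `W`
  have hKW : ∀ w ∈ W, ∀ x, inner ℝ w (K x) = c * inner ℝ w x := by
    intro w hw x
    rw [hKin, hc, ← intervalIntegral.integral_mul_const]
    refine intervalIntegral.integral_congr fun v hv => ?_
    rw [Set.uIcc_of_le hab.le] at hv
    have := (V v).starProjection_eq_self_iff.2 ((hW w).1 hw v hv)
    rw [← Submodule.inner_starProjection_left_eq_right, this]
  let T : H →L[ℝ] H := K - c • W.starProjection
  have hT : IsCompactOperator T := hKc.sub ((isCompactOperator_starProjection W).smul c)
  have hTa : ∀ x, T x = K x - c • W.starProjection x := fun x => rfl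
  have hnot : ¬ Module.End.HasEigenvalue (T : Module.End ℝ H) c := by
    intro he
    obtain ⟨x, hx⟩ := he.exists_hasEigenvector
    have hx1 : T x = c • x := hx.apply_eq_smul
    have hx0 : x ≠ 0 := hx.2
    have e1 : inner ℝ x (K x) - c * inner ℝ x (W.starProjection x) = c * inner ℝ x x := by
      rw [hTa] at hx1
      have := congrArg (inner ℝ x) hx1
      simpa [inner_sub_right, inner_smul_right] using this
    have e2 : c * inner ℝ x x - inner ℝ x (K x) =
        ∫ v in a..b, η v * ‖x - (V v).starProjection x‖ ^ 2 := by
      rw [hKin, hc, ← intervalIntegral.integral_mul_const, ← intervalIntegral.integral_sub]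
      · refine intervalIntegral.integral_congr fun v _ => ?_
        rw [← inner_self_sub_inner_starProjection]
        ring
      · exact (hη.mul continuous_const).intervalIntegrable _ _
      · exact ContinuousOn.intervalIntegrable_of_Icc hab.le
          (hη.continuousOn.mul (continuousOn_const.inner (hVx x)))
    have e3 : inner ℝ x (W.starProjection x) = ‖W.starProjection x‖ ^ 2 := by
      rw [← real_inner_self_eq_norm_sq, Submodule.inner_starProjection_left_eq_right,
        Submodule.starProjection_eq_self_iff.2 (W.starProjection_apply_mem x)]
    have hcont : ContinuousOn (fun v => η v * ‖x - (V v).starProjection x‖ ^ 2) (Set.Icc a b) :=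
      hη.continuousOn.mul ((continuousOn_const.sub (hVx x)).norm.pow 2)
    have hnn : ∀ v ∈ Set.Icc a b, 0 ≤ η v * ‖x - (V v).starProjection x‖ ^ 2 := fun v hv =>
      mul_nonneg (hηnn v hv) (sq_nonneg _)
    have hint : 0 ≤ ∫ v in a..b, η v * ‖x - (V v).starProjection x‖ ^ 2 :=
      intervalIntegral.integral_nonneg hab.le hnn
    have hPW : 0 ≤ c * ‖W.starProjection x‖ ^ 2 := by positivity
    have hint0 : ∫ v in a..b, η v * ‖x - (V v).starProjection x‖ ^ 2 = 0 := by
      rw [e3] at e1; linarith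
    have hW0 : W.starProjection x = 0 := by
      have : c * ‖W.starProjection x‖ ^ 2 = 0 := by rw [e3] at e1; linarith
      simpa [hcpos.ne'] using this
    have hzero : ∀ v ∈ Set.Icc a b, η v * ‖x - (V v).starProjection x‖ ^ 2 = 0 := by
      by_contra! hcon
      obtain ⟨v, hv, hne⟩ := hcon
      have := intervalIntegral.integral_pos hab hcont
        (fun v hv => hnn v (Set.Ioc_subset_Icc_self hv)) ⟨v, hv, lt_of_le_of_ne (hnn v hv) hne.symm⟩
      exact this.ne' hint0
    -- `η` vanishes at the endpoints, so there the conclusion comes from continuity of `P`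
    have hclos : Set.EqOn (fun v => x - (V v).starProjection x) (fun _ => 0) (Set.Icc a b) := by
      refine Set.EqOn.of_subset_closure (s := Set.Ioo a b) ?_ (continuousOn_const.sub (hVx x))
        continuousOn_const Set.Ioo_subset_Icc_self (by rw [closure_Ioo hab.ne])
      intro v hv
      have := hzero v (Set.Ioo_subset_Icc_self hv)
      simpa [(hpos v hv).ne'] using this
    have hxW : x ∈ W := (hW x).2 fun v hv =>
      (V v).starProjection_eq_self_iff.1 (sub_eq_zero.1 (hclos hv)).symm
    exact hx0 (by rw [← hW0, Submodule.starProjection_eq_self_iff.2 hxW])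
  have hres := (hT.hasEigenvalue_or_mem_resolventSet hcpos.ne').resolve_left hnot
  obtain ⟨u, hu⟩ := spectrum.mem_resolventSet_iff.1 hres
  refine ⟨(↑u⁻¹ : H →L[ℝ] H) ρ, ?_⟩
  set h := (↑u⁻¹ : H →L[ℝ] H) ρ
  have hsol : c • h - K h + c • W.starProjection h = ρ := by
    have : ((u : H →L[ℝ] H) * (↑u⁻¹ : H →L[ℝ] H)) ρ = ρ := by
      rw [Units.mul_inv]; rfl
    rw [hu] at this
    change (algebraMap ℝ (H →L[ℝ] H) c - T) h = ρ at this
    rw [sub_apply, hTa, ContinuousLinearMap.algebraMap_apply] at this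
    rw [← this]; abel
  have hw0 : W.starProjection h = 0 := by
    set w := W.starProjection h with hw
    have hwW : w ∈ W := W.starProjection_apply_mem h
    have := congrArg (inner ℝ w) hsol
    rw [hρ w ((hW w).1 hwW), inner_add_right, inner_sub_right, hKW w hwW, inner_smul_right,
      inner_smul_right, sub_self, zero_add] at this
    simpa [hcpos.ne'] using this
  rw [hw0, smul_zero, add_zero] at hsol
  rw [← hKapp, ← hsol]
  abel

/-! ### Gram matrices and projections -/

lemma contDiff_matrix_det {n : ℕ} {M : ℝ → Matrix (Fin n) (Fin n) ℝ}
    (hM : ∀ i j, ContDiff ℝ (⊤ : ℕ∞) fun v => M v i j) :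
    ContDiff ℝ (⊤ : ℕ∞) fun v => (M v).det := by
  simp only [Matrix.det_apply']
  exact ContDiff.sum fun σ _ => contDiff_const.mul (contDiff_prod fun i _ => hM _ _)

lemma contDiffAt_matrix_inv {n : ℕ} {M : ℝ → Matrix (Fin n) (Fin n) ℝ}
    (hM : ∀ i j, ContDiff ℝ (⊤ : ℕ∞) fun v => M v i j) {v : ℝ} (hv : (M v).det ≠ 0)
    (i j : Fin n) : ContDiffAt ℝ (⊤ : ℕ∞) (fun v => (M v)⁻¹ i j) v := by
  have hadj : ContDiff ℝ (⊤ : ℕ∞) fun v => (M v).adjugate i j := by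
    simp only [Matrix.adjugate_apply]
    refine contDiff_matrix_det fun k l => ?_
    by_cases hk : k = j
    · subst hk
      simpa using contDiff_const
    · simpa [Matrix.updateRow_ne hk] using hM k l
  have : (fun v => (M v)⁻¹ i j) = fun v => (M v).det⁻¹ * (M v).adjugate i j := by
    ext v
    simp [Matrix.inv_def]
  rw [this]
  exact ((contDiff_matrix_det hM).contDiffAt.inv hv).mul hadj.contDiffAt

lemma gram_mulVec_inv {H : Type*} [NormedAddCommGroup H] [InnerProductSpace ℝ H] {n : ℕ}
    {g : Fin n → H} (hg : LinearIndependent ℝ g) (y : Fin n → ℝ) (k : Fin n) :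
    ∑ i, (∑ j, (Matrix.gram ℝ g)⁻¹ i j * y j) * inner ℝ (g k) (g i) = y k := by
  have hdet : IsUnit (Matrix.gram ℝ g).det :=
    (Matrix.det_gram_ne_zero_iff_linearIndependent.2 hg).isUnit
  have h : (Matrix.gram ℝ g).mulVec ((Matrix.gram ℝ g)⁻¹.mulVec y) k = y k := by
    rw [Matrix.mulVec_mulVec, Matrix.mul_nonsing_inv _ hdet, Matrix.one_mulVec]
  rw [← h]
  simp only [Matrix.mulVec, dotProduct, Matrix.gram_apply]
  exact Finset.sum_congr rfl fun i _ => mul_comm _ _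

lemma starProjection_span_eq {H : Type*} [NormedAddCommGroup H] [InnerProductSpace ℝ H] {n : ℕ}
    {g : Fin n → H} (hg : LinearIndependent ℝ g)
    [(Submodule.span ℝ (Set.range g)).HasOrthogonalProjection] (x : H) :
    (Submodule.span ℝ (Set.range g)).starProjection x =
      ∑ i, (∑ j, (Matrix.gram ℝ g)⁻¹ i j * inner ℝ (g j) x) • g i := by
  refine Submodule.eq_starProjection_of_mem_of_inner_eq_zero ?_ ?_
  · exact Submodule.sum_mem _ fun i _ =>
      Submodule.smul_mem _ _ (Submodule.subset_span ⟨i, rfl⟩)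
  · intro w hw
    induction hw using Submodule.span_induction with
    | mem w hw =>
      obtain ⟨k, rfl⟩ := hw
      rw [real_inner_comm, inner_sub_right, inner_sum]
      simp only [inner_smul_right]
      rw [gram_mulVec_inv hg (fun j => inner ℝ (g j) x) k, sub_self]
    | zero => exact inner_zero_right _
    | add w w' _ _ h h' => rw [inner_add_right, h, h', add_zero]
    | smul c w _ h => rw [inner_smul_right, h, mul_zero]

/-! ### The two implications -/

/-- A smooth function on `ℝ × 𝕊²` as a continuous curve in `C(𝕊², ℝ)`. -/
def sliceMap {G : ℝ × Sphere2 → ℝ}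
    (hG : ContMDiff ((𝓘(ℝ, ℝ)).prod (𝓡 2)) 𝓘(ℝ, ℝ) (⊤ : ℕ∞) G) : C(ℝ, C(Sphere2, ℝ)) :=
  ContinuousMap.curry ⟨G, hG.continuous⟩

lemma sliceMap_apply {G : ℝ × Sphere2 → ℝ}
    (hG : ContMDiff ((𝓘(ℝ, ℝ)).prod (𝓡 2)) 𝓘(ℝ, ℝ) (⊤ : ℕ∞) G) (v : ℝ) (ω : Sphere2) :
    sliceMap hG v ω = G (v, ω) := rfl

/-- The inclusion of `C(𝕊², ℝ)` into `L²(𝕊², μ)`; it is injective because `μ` charges every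
nonempty open set. -/
abbrev toL2 : C(Sphere2, ℝ) →L[ℝ] Lp ℝ 2 sphereMeasure :=
  ContinuousMap.toLp 2 sphereMeasure ℝ

lemma toL2_injective : Function.Injective toL2 := ContinuousMap.toLp_injective sphereMeasure

lemma inner_toL2 (f g : C(Sphere2, ℝ)) :
    inner ℝ (toL2 f) (toL2 g) = ∫ ω, f ω * g ω ∂sphereMeasure := by
  rw [ContinuousMap.inner_toLp]
  simp [mul_comm]

/-- The easy implication: by Fubini, `∫ ρ g dμ = ∫ₐᵇ (∫ F(v,·) g dμ) dv`, and each inner integral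
vanishes because `g` lies in the span of the `Gᵢ(v,·)`. -/
lemma orthogonal_of_extension {a b : ℝ} (hab : a < b) {n : ℕ} {G : Fin n → ℝ × Sphere2 → ℝ}
    (hG : ∀ i, ContMDiff ((𝓘(ℝ, ℝ)).prod (𝓡 2)) 𝓘(ℝ, ℝ) (⊤ : ℕ∞) (G i))
    {ρ : Sphere2 → ℝ} {F : ℝ × Sphere2 → ℝ}
    (hF : ContMDiff ((𝓘(ℝ, ℝ)).prod (𝓡 2)) 𝓘(ℝ, ℝ) (⊤ : ℕ∞) F)
    (hF0 : ∀ v ∉ Set.Ioo a b, ∀ ω, F (v, ω) = 0)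
    (hFρ : ∀ ω, (∫ v in a..b, F (v, ω)) = ρ ω)
    (hFG : ∀ v ∈ Set.Icc a b, ∀ i, (∫ ω, F (v, ω) * G i (v, ω) ∂sphereMeasure) = 0)
    {g : Sphere2 → ℝ} (hg : ∀ v ∈ Set.Icc a b,
      g ∈ Submodule.span ℝ (Set.range fun i : Fin n => fun ω : Sphere2 => G i (v, ω))) :
    (∫ ω, ρ ω * g ω ∂sphereMeasure) = 0 := by
  have hex : ∀ v ∈ Set.Icc a b, ∃ c : Fin n → ℝ, ∀ ω, g ω = ∑ i, c i * G i (v, ω) := by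
    intro v hv
    obtain ⟨c, hc⟩ := (Submodule.mem_span_range_iff_exists_fun ℝ).1 (hg v hv)
    exact ⟨c, fun ω => by rw [← hc]; simp⟩
  have hGv : ∀ i v, Continuous fun ω => G i (v, ω) := fun i v =>
    (hG i).continuous.comp (Continuous.prodMk_right v)
  have hFv : ∀ v, Continuous fun ω => F (v, ω) := fun v =>
    hF.continuous.comp (Continuous.prodMk_right v)
  have hgc : Continuous g := by
    obtain ⟨c, hc⟩ := hex a ⟨le_rfl, hab.le⟩
    rw [funext hc]
    exact continuous_finsetSum _ fun i _ => continuous_const.mul (hGv i a)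
  have hslice : ∀ v ∈ Set.Icc a b, ∫ ω, F (v, ω) * g ω ∂sphereMeasure = 0 := by
    intro v hv
    obtain ⟨c, hc⟩ := hex v hv
    have : ∀ ω, F (v, ω) * g ω = ∑ i, c i * (F (v, ω) * G i (v, ω)) := fun ω => by
      rw [hc, Finset.mul_sum]
      exact Finset.sum_congr rfl fun i _ => by ring
    simp only [this]
    rw [integral_finsetSum]
    · simp [integral_const_mul, hFG v hv]
    · intro i _
      exact (continuous_const.mul ((hFv v).mul (hGv i v))).integrable_of_hasCompactSupport
        (HasCompactSupport.of_compactSpace _)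
  calc ∫ ω, ρ ω * g ω ∂sphereMeasure
      = ∫ ω, (∫ v in Set.Ioc a b, F (v, ω) * g ω) ∂sphereMeasure := by
        refine integral_congr_ae (Filter.Eventually.of_forall fun ω => ?_)
        simp only
        rw [integral_mul_const, ← hFρ, intervalIntegral.integral_of_le hab.le]
    _ = ∫ v in Set.Ioc a b, ∫ ω, F (v, ω) * g ω ∂sphereMeasure := by
        refine integral_integral_swap_of_hasCompactSupport ?_ ?_
        · exact (hF.continuous.comp continuous_swap).mul (hgc.comp continuous_fst)
        · refine HasCompactSupport.intro ((isCompact_univ (X := Sphere2)).prod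
            (isCompact_Icc (a := a) (b := b))) ?_
          rintro ⟨ω, v⟩ hp
          have hv : v ∉ Set.Ioo a b := fun hv => hp ⟨trivial, Set.Ioo_subset_Icc_self hv⟩
          simp [Function.uncurry, hF0 v hv]
    _ = 0 := by
        rw [setIntegral_congr_fun measurableSet_Ioc
          fun v hv => hslice v (Set.Ioc_subset_Icc_self hv)]
        simp

/-- The construction of `F(v,·) = η(v) (1 - P(v)) h₀`: the Fredholm alternative gives `h ∈ L²`, and
the equation `c h = ρ + ∫ η P h dv` shows that `h` has a smooth representative `h₀`. -/
lemma exists_extension_of_orthogonal {a b : ℝ} (hab : a < b) {n : ℕ}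
    {G : Fin n → ℝ × Sphere2 → ℝ}
    (hG : ∀ i, ContMDiff ((𝓘(ℝ, ℝ)).prod (𝓡 2)) 𝓘(ℝ, ℝ) (⊤ : ℕ∞) (G i))
    (hindep : ∀ v ∈ Set.Icc a b,
      LinearIndependent ℝ fun i : Fin n => fun ω : Sphere2 => G i (v, ω))
    {ρ : Sphere2 → ℝ} (hρ : ContMDiff (𝓡 2) 𝓘(ℝ, ℝ) (⊤ : ℕ∞) ρ)
    (horth : ∀ g : Sphere2 → ℝ,
        (∀ v ∈ Set.Icc a b,
          g ∈ Submodule.span ℝ (Set.range fun i : Fin n => fun ω : Sphere2 => G i (v, ω))) →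
        (∫ ω, ρ ω * g ω ∂sphereMeasure) = 0) :
    ∃ F : ℝ × Sphere2 → ℝ,
        ContMDiff ((𝓘(ℝ, ℝ)).prod (𝓡 2)) 𝓘(ℝ, ℝ) (⊤ : ℕ∞) F ∧
        (∀ v ∉ Set.Ioo a b, ∀ ω, F (v, ω) = 0) ∧
        (∀ ω, (∫ v in a..b, F (v, ω)) = ρ ω) ∧
        (∀ v ∈ Set.Icc a b, ∀ i,
          (∫ ω, F (v, ω) * G i (v, ω) ∂sphereMeasure) = 0) := by
  let ρc : C(Sphere2, ℝ) := ⟨ρ, hρ.continuous⟩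
  let gc : ℝ → Fin n → C(Sphere2, ℝ) := fun v i => sliceMap (hG i) v
  let g : ℝ → Fin n → Lp ℝ 2 sphereMeasure := fun v i => toL2 (gc v i)
  have hgc_cont : ∀ i, Continuous fun v => gc v i := fun i => (sliceMap (hG i)).continuous
  have hg_cont : ∀ i, Continuous fun v => g v i := fun i => toL2.continuous.comp (hgc_cont i)
  have hg_indep : ∀ v ∈ Set.Icc a b, LinearIndependent ℝ (g v) := by
    intro v hv
    have h1 : LinearIndependent ℝ (gc v) :=
      LinearIndependent.of_comp (ContinuousMap.coeFnLinearMap ℝ) (hindep v hv)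
    exact h1.map' toL2.toLinearMap (LinearMap.ker_eq_bot.2 toL2_injective)
  -- a smooth function positive exactly on `(a, b)`
  let η : ℝ → ℝ := fun v => expNegInvGlue (v - a) * expNegInvGlue (b - v)
  have hη : ContDiff ℝ (⊤ : ℕ∞) η :=
    (expNegInvGlue.contDiff.comp (contDiff_id.sub contDiff_const)).mul
      (expNegInvGlue.contDiff.comp (contDiff_const.sub contDiff_id))
  have hηpos : ∀ v ∈ Set.Ioo a b, 0 < η v := fun v hv =>
    mul_pos (expNegInvGlue.pos_of_pos (sub_pos.2 hv.1)) (expNegInvGlue.pos_of_pos (sub_pos.2 hv.2))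
  have hηzero : ∀ v ∉ Set.Ioo a b, η v = 0 := by
    intro v hv
    by_cases h : a < v
    · have : b ≤ v := by
        by_contra! h'
        exact hv ⟨h, h'⟩
      simp [η, expNegInvGlue.zero_of_nonpos (sub_nonpos.2 this)]
    · simp [η, expNegInvGlue.zero_of_nonpos (sub_nonpos.2 (not_lt.1 h))]
  let M : ℝ → Matrix (Fin n) (Fin n) ℝ := fun v => Matrix.gram ℝ (g v)
  have hM : ∀ i j, ContDiff ℝ (⊤ : ℕ∞) fun v => M v i j := by
    intro i j
    have : (fun v => M v i j) = fun v => ∫ ω, G i (v, ω) * G j (v, ω) ∂sphereMeasure := by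
      ext v
      exact inner_toL2 (gc v i) (gc v j)
    rw [this]
    simpa using contDiff_integral_sphere (G := fun p => G i p * G j p) ((hG i).mul (hG j))
      (continuous_const (y := (1 : ℝ)))
  have hdet : ∀ v ∈ Set.Icc a b, (M v).det ≠ 0 := fun v hv =>
    Matrix.det_gram_ne_zero_iff_linearIndependent.2 (hg_indep v hv)
  let B : ℝ → Fin n → Fin n → ℝ := fun v i j => η v * (M v)⁻¹ i j
  have hB : ∀ i j, ContDiff ℝ (⊤ : ℕ∞) fun v => B v i j := by
    intro i j
    rw [contDiff_iff_contDiffAt]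
    intro v
    by_cases hv : v ∈ Set.Icc a b
    · exact hη.contDiffAt.mul (contDiffAt_matrix_inv hM (hdet v hv) i j)
    · refine (contDiffAt_const (c := (0 : ℝ))).congr_of_eventuallyEq ?_
      filter_upwards [isClosed_Icc.isOpen_compl.mem_nhds hv] with u hu
      simp [B, hηzero u fun h => hu (Set.Ioo_subset_Icc_self h)]
  let V : ℝ → Submodule ℝ (Lp ℝ 2 sphereMeasure) := fun v => Submodule.span ℝ (Set.range (g v))
  have hVfin : ∀ v, FiniteDimensional ℝ (V v) := fun v =>
    FiniteDimensional.span_of_finite ℝ (Set.finite_range _)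
  have hVproj : ∀ v ∈ Set.Icc a b, ∀ x, (V v).starProjection x =
      ∑ i, (∑ j, (M v)⁻¹ i j * inner ℝ (g v j) x) • g v i := fun v hv x =>
    starProjection_span_eq (hg_indep v hv) x
  have hVcont : ContinuousOn (fun v => (V v).starProjection) (Set.Icc a b) := by
    have h1 : ContinuousOn (fun v => ∑ i, ∑ j, (M v)⁻¹ i j •
        InnerProductSpace.rankOne ℝ (g v i) (g v j)) (Set.Icc a b) := by
      refine continuousOn_finsetSum _ fun i _ => continuousOn_finsetSum _ fun j _ => ?_
      refine ContinuousOn.smul (fun v hv =>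
        (contDiffAt_matrix_inv hM (hdet v hv) i j).continuousAt.continuousWithinAt) ?_
      refine Continuous.continuousOn ?_
      exact ((InnerProductSpace.rankOne ℝ).continuous.comp (hg_cont i)).clm_apply (hg_cont j)
    refine h1.congr fun v hv => ?_
    ext1 x
    rw [hVproj v hv x]
    simp [Finset.sum_smul, smul_smul]
  obtain ⟨h, hh⟩ := exists_averaged_projection_preimage hab V hVcont hη.continuous hηpos
    (toL2 ρc) (by
      intro w hw
      have hex : ∀ v ∈ Set.Icc a b, ∃ c : Fin n → ℝ, toL2 (∑ i, c i • gc v i) = w := by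
        intro v hv
        obtain ⟨c, hc⟩ := (Submodule.mem_span_range_iff_exists_fun ℝ).1 (hw v hv)
        exact ⟨c, by rw [← hc]; simp [g]⟩
      obtain ⟨c, hc⟩ := hex a ⟨le_rfl, hab.le⟩
      have := horth (∑ i, c i • gc a i : C(Sphere2, ℝ)) (by
        intro v hv
        obtain ⟨c', hc'⟩ := hex v hv
        rw [toL2_injective (hc.trans hc'.symm)]
        refine (Submodule.mem_span_range_iff_exists_fun ℝ).2 ⟨c', ?_⟩
        ext ω
        simp [gc, sliceMap_apply])
      rw [← hc, real_inner_comm, inner_toL2]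
      exact this)
  set c := ∫ v in a..b, η v with hc
  have hcpos : 0 < c := intervalIntegral.intervalIntegral_pos_of_pos_on
    (hη.continuous.intervalIntegrable _ _) hηpos hab
  -- the coefficients of `η(v) P(v) h` in the basis `G₁(v,·), …, Gₙ(v,·)`
  let β : ℝ → Fin n → ℝ := fun v i => ∑ j, B v i j * inner ℝ (g v j) h
  have hβcont : ∀ i, Continuous fun v => β v i := fun i =>
    continuous_finsetSum _ fun j _ => (hB i j).continuous.mul ((hg_cont j).inner continuous_const)
  have hβG : ∀ i, Continuous fun v => β v i • gc v i := fun i => (hβcont i).smul (hgc_cont i)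
  let h₀ : C(Sphere2, ℝ) := c⁻¹ • (ρc + ∫ v in a..b, ∑ i, β v i • gc v i)
  have hint : IntervalIntegrable (fun v => ∑ i, β v i • gc v i) volume a b :=
    (continuous_finsetSum _ fun i _ => hβG i).intervalIntegrable _ _
  have hh₀ : toL2 h₀ = h := by
    have e1 : toL2 (∫ v in a..b, ∑ i, β v i • gc v i) =
        ∫ v in a..b, η v • (V v).starProjection h := by
      rw [← toL2.intervalIntegral_comp_comm hint]
      refine intervalIntegral.integral_congr fun v hv => ?_
      rw [Set.uIcc_of_le hab.le] at hv
      simp only [hVproj v hv, map_sum, map_smul, Finset.smul_sum, smul_smul]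
      refine Finset.sum_congr rfl fun i _ => ?_
      simp only [β, B, Finset.mul_sum, mul_assoc]
      rfl
    simp only [h₀, map_smul, map_add, e1]
    rw [← hh, smul_smul, inv_mul_cancel₀ hcpos.ne', one_smul]
  have hβeq : ∀ v i, β v i = ∑ j, B v i j * ∫ ω, G j (v, ω) * h₀ ω ∂sphereMeasure := by
    intro v i
    refine Finset.sum_congr rfl fun j _ => ?_
    rw [← hh₀, inner_toL2]
    rfl
  have hh₀app : ∀ ω, c * h₀ ω = ρ ω + ∫ v in a..b, ∑ i, β v i * G i (v, ω) := by
    intro ω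
    have e2 : (∫ v in a..b, ∑ i, β v i • gc v i) ω = ∫ v in a..b, ∑ i, β v i * G i (v, ω) := by
      have := (ContinuousMap.evalCLM ℝ ω).intervalIntegral_comp_comm hint
      simpa [gc, sliceMap_apply] using this.symm
    have e3 : h₀ ω = c⁻¹ * (ρ ω + (∫ v in a..b, ∑ i, β v i • gc v i) ω) := rfl
    rw [e3, e2, ← mul_assoc, mul_inv_cancel₀ hcpos.ne', one_mul]
  -- smoothness of `β` needs only continuity of `h₀`, and it gives smoothness of `h₀`
  have hβ : ∀ i, ContDiff ℝ (⊤ : ℕ∞) fun v => β v i := by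
    intro i
    simp only [hβeq]
    exact ContDiff.sum fun j _ => (hB i j).mul (contDiff_integral_sphere (hG j) h₀.continuous)
  have hfst : ∀ {f : ℝ → ℝ}, ContDiff ℝ (⊤ : ℕ∞) f →
      ContMDiff ((𝓘(ℝ, ℝ)).prod (𝓡 2)) 𝓘(ℝ, ℝ) (⊤ : ℕ∞) fun p : ℝ × Sphere2 => f p.1 :=
    fun hf => hf.contMDiff.comp contMDiff_fst
  have hsum : ContMDiff ((𝓘(ℝ, ℝ)).prod (𝓡 2)) 𝓘(ℝ, ℝ) (⊤ : ℕ∞)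
      fun p : ℝ × Sphere2 => ∑ i, β p.1 i * G i p :=
    contMDiff_finsetSum fun i _ => (hfst (hβ i)).mul (hG i)
  have hh₀smooth : ContMDiff (𝓡 2) 𝓘(ℝ, ℝ) (⊤ : ℕ∞) h₀ := by
    have e : (h₀ : Sphere2 → ℝ) =
        fun ω => c⁻¹ * (ρ ω + ∫ v in a..b, ∑ i, β v i * G i (v, ω)) := by
      ext ω
      rw [← hh₀app, ← mul_assoc, inv_mul_cancel₀ hcpos.ne', one_mul]
    rw [e]
    exact contMDiff_const.mul (hρ.add (contMDiff_integral_interval hab.le hsum))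
  have hGi : ∀ i v, Continuous fun ω => G i (v, ω) := fun i v =>
    (hG i).continuous.comp (Continuous.prodMk_right v)
  refine ⟨fun p => η p.1 * h₀ p.2 - ∑ i, β p.1 i * G i p, ?_, ?_, ?_, ?_⟩
  · exact ((hfst hη).mul (hh₀smooth.comp contMDiff_snd)).sub hsum
  · intro v hv ω
    simp [β, B, hηzero v hv]
  · intro ω
    simp only
    rw [intervalIntegral.integral_sub, intervalIntegral.integral_mul_const, ← hc, hh₀app,
      add_sub_cancel_right]
    · exact (hη.continuous.mul continuous_const).intervalIntegrable _ _
    · exact (hsum.continuous.comp (Continuous.prodMk_left ω)).intervalIntegrable _ _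
  · intro v hv k
    let q : C(Sphere2, ℝ) := η v • h₀ - ∑ i, β v i • gc v i
    have hq : ∫ ω, (η v * h₀ ω - ∑ i, β v i * G i (v, ω)) * G k (v, ω) ∂sphereMeasure =
        inner ℝ (toL2 q) (g v k) := by
      rw [inner_toL2]
      simp [q, gc, sliceMap_apply]
    have hq2 : toL2 q = η v • (h - (V v).starProjection h) := by
      simp only [q, map_sub, map_smul, map_sum, hh₀, smul_sub, hVproj v hv, Finset.smul_sum,
        smul_smul]
      congr 1
      refine Finset.sum_congr rfl fun i _ => ?_
      simp only [β, B, Finset.mul_sum, mul_assoc]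
      rfl
    simp only
    rw [hq, hq2, inner_smul_left,
      (V v).starProjection_inner_eq_zero h _ (Submodule.subset_span ⟨k, rfl⟩), mul_zero]

/-- **Lemma 3.5 of the paper.** Let `G₁, …, Gₙ : ℝ × 𝕊² → ℝ` be smooth with
`G₁(v,·), …, Gₙ(v,·)` linearly independent for every `v ∈ [a,b]`, and let `ρ : 𝕊² → ℝ` be
smooth. Then there is a smooth `F : ℝ × 𝕊² → ℝ`, vanishing (in particular to infinite order)
outside `(a,b) × 𝕊²`, with `∫ₐᵇ F(v,ω) dv = ρ(ω)` and `∫_{𝕊²} F(v,·)·Gᵢ(v,·) dμ = 0` for all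
`v ∈ [a,b]`, `i = 1, …, n`, if and only if `ρ` is `L²`-orthogonal to every function lying in
the span of `G₁(v,·), …, Gₙ(v,·)` for each `v ∈ [a,b]`. -/
theorem gluing_extension_iff_orthogonal (a b : ℝ) (hab : a < b) (n : ℕ) (hn : 1 ≤ n)
    (G : Fin n → ℝ × Sphere2 → ℝ)
    (hG : ∀ i, ContMDiff ((𝓘(ℝ, ℝ)).prod (𝓡 2)) 𝓘(ℝ, ℝ) (⊤ : ℕ∞) (G i))
    (hindep : ∀ v ∈ Set.Icc a b,
      LinearIndependent ℝ fun i : Fin n => fun ω : Sphere2 => G i (v, ω))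
    (ρ : Sphere2 → ℝ) (hρ : ContMDiff (𝓡 2) 𝓘(ℝ, ℝ) (⊤ : ℕ∞) ρ) :
    (∃ F : ℝ × Sphere2 → ℝ,
        ContMDiff ((𝓘(ℝ, ℝ)).prod (𝓡 2)) 𝓘(ℝ, ℝ) (⊤ : ℕ∞) F ∧
        (∀ v ∉ Set.Ioo a b, ∀ ω, F (v, ω) = 0) ∧
        (∀ ω, (∫ v in a..b, F (v, ω)) = ρ ω) ∧
        (∀ v ∈ Set.Icc a b, ∀ i,
          (∫ ω, F (v, ω) * G i (v, ω) ∂sphereMeasure) = 0)) ↔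
      (∀ g : Sphere2 → ℝ,
        (∀ v ∈ Set.Icc a b,
          g ∈ Submodule.span ℝ (Set.range fun i : Fin n => fun ω : Sphere2 => G i (v, ω))) →
        (∫ ω, ρ ω * g ω ∂sphereMeasure) = 0) := by
  constructor
  · rintro ⟨F, hF, hF0, hFρ, hFG⟩ g hg
    exact orthogonal_of_extension hab hG hF hF0 hFρ hFG hg
  · exact exists_extension_of_orthogonal hab hG hindep hρ
end
end

section
/- Let X be a topological space and let A : ℕ → Set X be a sequence of closed subsets which is decreasing (A(n+1) ⊆ A(n) for every n), with A(0) = X, and such that A(n₀) = ∅ for some n₀ ∈ ℕ. Then the union over n of the interiors of the sets A(n) \ A(n+1) is an open dense subset of X. -/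
/-- Topological decomposition from the proof of Lemma 3.3 of the paper: if `A : ℕ → Set X` is
a decreasing sequence of closed sets with `A 0 = X` and `A n₀ = ∅` for some `n₀`, then
`𝒵 = ⋃ₙ int(A n \ A (n+1))` is an open dense subset of `X`. -/
theorem union_interiors_of_decreasing_closed_dense
    {X : Type*} [TopologicalSpace X] (A : ℕ → Set X)
    (hclosed : ∀ n, IsClosed (A n)) (hdec : ∀ n, A (n + 1) ⊆ A n)
    (h0 : A 0 = Set.univ) (n₀ : ℕ) (hempty : A n₀ = ∅) :
    IsOpen (⋃ n, interior (A n \ A (n + 1))) ∧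
      Dense (⋃ n, interior (A n \ A (n + 1))) := by
  classical
  refine ⟨isOpen_iUnion fun n => isOpen_interior, dense_iff_inter_open.2 fun U hU hne => ?_⟩
  -- Let `m + 1` be the least index with `U ⊈ A (m + 1)`. Then `U ⊆ A m`, so `U \ A (m + 1)` is a
  -- nonempty open subset of `A m \ A (m + 1)`.
  have hex : ∃ n, ¬ U ⊆ A n := ⟨n₀, fun h => by
    obtain ⟨x, hx⟩ := hne
    simpa [hempty] using h hx⟩
  obtain ⟨m, hm⟩ : ∃ m, Nat.find hex = m + 1 := Nat.exists_eq_succ_of_ne_zero fun h => by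
    have := Nat.find_spec hex
    rw [h, h0] at this
    exact this (Set.subset_univ U)
  have hnot : ¬ U ⊆ A (m + 1) := hm ▸ Nat.find_spec hex
  have hsub : U ⊆ A m := not_not.1 (Nat.find_min hex (by omega))
  obtain ⟨x, hxU, hxA⟩ := Set.not_subset.1 hnot
  exact ⟨x, hxU, Set.mem_iUnion.2 ⟨m, mem_interior.2 ⟨U \ A (m + 1),
    Set.sdiff_subset_sdiff_left hsub, hU.sdiff (hclosed _), hxU, hxA⟩⟩⟩
end

section
/- Let H be a real Hilbert space, n ∈ ℕ, ι a nonempty index set, and (Σ i)_{i ∈ ι} a family of subspaces of H, each finite-dimensional with dim(Σ i) ≤ n, such that the intersection of all the Σ i is the zero subspace. Then there exists a finite-dimensional subspace W of H such that the intersection over i ∈ ι of the images of the Σ i under the orthogonal projection of H onto W is the zero subspace. -/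
/-!
A finite subfamily of the `S i` already has trivial intersection (`exists_finset_inf_eq_bot`).
Let `W` be the span of that subfamily. The projection onto `W` fixes each of its members, so a
vector lying in all the projected subspaces lies in every member of the subfamily, hence is zero.
-/

/-- Finite-dimensional subspaces satisfy the descending chain condition, so if a
nonempty family of them has trivial intersection, some finite subfamily already does. -/
lemma exists_finset_inf_eq_bot {H : Type*} [AddCommGroup H] [Module ℝ H]
    {ι : Type*} [Nonempty ι] (S : ι → Submodule ℝ H)
    (hfd : ∀ i, FiniteDimensional ℝ (S i)) (hint : ⨅ i, S i = ⊥) :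
    ∃ F : Finset ι, F.inf S = ⊥ := by
  classical
  obtain ⟨i₀⟩ := ‹Nonempty ι›
  have := hfd i₀
  -- Intersecting with `S i₀` keeps the dimension finite even when `F` is empty.
  let d : Finset ι → ℕ := fun F => Module.finrank ℝ ↥((insert i₀ F).inf S)
  let F := Function.argmin d
  have hle : ∀ G : Finset ι, (insert i₀ G).inf S ≤ S i₀ :=
    fun G => Finset.inf_le (Finset.mem_insert_self _ _)
  have : FiniteDimensional ℝ ↥((insert i₀ F).inf S) := Submodule.finiteDimensional_of_le (hle F)
  refine ⟨insert i₀ F, eq_bot_iff.2 (hint ▸ le_iInf fun i => ?_)⟩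
  -- By minimality of the dimension, adjoining `i` does not shrink the intersection.
  have hsub : (insert i₀ (insert i F)).inf S ≤ (insert i₀ F).inf S :=
    Finset.inf_mono (Finset.insert_subset_insert _ (Finset.subset_insert _ _))
  have heq : (insert i₀ (insert i F)).inf S = (insert i₀ F).inf S :=
    Submodule.eq_of_le_of_finrank_le hsub (Function.argmin_le d (insert i F))
  rw [← heq]
  exact Finset.inf_le (by simp)

/-- Construction of the auxiliary finite-dimensional space `W` in the proof of Lemma 3.5 of
the paper: if `(Σᵢ)` is a family of subspaces of a real Hilbert space, each of dimension at
most `n`, with trivial common intersection, then there is a finite-dimensional subspace `W`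
such that the images of the `Σᵢ` under the orthogonal projection onto `W` have trivial common
intersection.  (Here `w ∈ W` is the orthogonal projection onto `W` of `y` iff `y − w ∈ Wᗮ`.) -/
theorem exists_finiteDim_projection_inter_bot
    {H : Type*} [NormedAddCommGroup H] [InnerProductSpace ℝ H] [CompleteSpace H]
    (n : ℕ) {ι : Type*} [Nonempty ι] (S : ι → Submodule ℝ H)
    (hfd : ∀ i, FiniteDimensional ℝ (S i))
    (hdim : ∀ i, Module.finrank ℝ (S i) ≤ n)
    (hint : ⨅ i, S i = ⊥) :
    ∃ W : Submodule ℝ H, FiniteDimensional ℝ W ∧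
      ∀ w : H, w ∈ W → (∀ i, ∃ y ∈ S i, y - w ∈ Wᗮ) → w = 0 := by
  obtain ⟨F, hF⟩ := exists_finset_inf_eq_bot S hfd hint
  -- Elements of `S i`, `i ∈ F`, are fixed by the projection onto the span of these subspaces.
  refine ⟨F.sup S, Submodule.finite_finset_sup F S, fun w hw h => ?_⟩
  have hmem : w ∈ F.inf S := by
    refine Submodule.mem_finsetInf.2 fun i hi => ?_
    obtain ⟨y, hy, hyw⟩ := h i
    have hyW : y ∈ F.sup S := Finset.le_sup (f := S) hi hy
    have h0 : y - w = 0 :=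
      Submodule.disjoint_def.1 (Submodule.orthogonal_disjoint (F.sup S)) _
        (Submodule.sub_mem _ hyW hw) hyw
    rwa [← sub_eq_zero.1 h0]
  rwa [hF, Submodule.mem_bot] at hmem
end

section
/- Let J ⊆ ℝ be an open interval and let c, d, Ψ, Ψ₁, Ψ₂ : ℝ → ℝ be functions such that on J: c and d are differentiable with c(τ) ≠ 0 for all τ ∈ J; Ψ is continuous; Ψ₁ is differentiable with Ψ₁'(τ) = c(τ)·Ψ(τ); Ψ₂ is differentiable with Ψ₂'(τ) = d(τ)·Ψ(τ) + c(τ)·Ψ₁(τ); and the identity c(τ)³ + c'(τ)·d(τ) − c(τ)·d'(τ) = 0 holds for all τ ∈ J (equivalently, (d/c)' = c on J). Then the function τ ↦ Ψ₂(τ) − (d(τ)/c(τ))·Ψ₁(τ) is constant on J. -/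
/-!
Dividing the obstruction identity by `c²` shows that `d/c` has derivative `c`. The derivative of
`Ψ₂ - (d/c)·Ψ₁` is then `(dΨ + cΨ₁) - (cΨ₁ + (d/c)·cΨ) = 0`, and a function with vanishing
derivative on an open interval is constant there.
-/

/-- The second-order conservation law of Section 6.1 of the paper (part of Theorem 4): on an
open interval `J` on which `c ≠ 0`, if `Ψ₁' = c·Ψ`, `Ψ₂' = d·Ψ + c·Ψ₁` and the obstruction
`c³ + c'·d − c·d' = 0` (equivalently `(d/c)' = c`) holds, then `Ψ₂ − (d/c)·Ψ₁` is constant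
on `J`. -/
theorem second_order_conservation_law
    (J : Set ℝ) (hJopen : IsOpen J) (hJconn : J.OrdConnected)
    (c c' d d' Ψ Ψ₁ Ψ₂ : ℝ → ℝ)
    (hc : ∀ τ ∈ J, HasDerivAt c (c' τ) τ)
    (hd : ∀ τ ∈ J, HasDerivAt d (d' τ) τ)
    (hcne : ∀ τ ∈ J, c τ ≠ 0)
    (hΨ : ContinuousOn Ψ J)
    (hΨ₁ : ∀ τ ∈ J, HasDerivAt Ψ₁ (c τ * Ψ τ) τ)
    (hΨ₂ : ∀ τ ∈ J, HasDerivAt Ψ₂ (d τ * Ψ τ + c τ * Ψ₁ τ) τ)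
    (hobstr : ∀ τ ∈ J, c τ ^ 3 + c' τ * d τ - c τ * d' τ = 0) :
    ∀ τ₁ ∈ J, ∀ τ₂ ∈ J,
      Ψ₂ τ₁ - d τ₁ / c τ₁ * Ψ₁ τ₁ = Ψ₂ τ₂ - d τ₂ / c τ₂ * Ψ₁ τ₂ := by
  -- The obstruction identity says exactly that `d/c` is a primitive of `c`.
  have hquot : ∀ τ ∈ J, HasDerivAt (fun t => d t / c t) (c τ) τ := by
    intro τ hτ
    have hne := hcne τ hτ
    refine ((hd τ hτ).fun_div (hc τ hτ) hne).congr_deriv ?_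
    rw [div_eq_iff (pow_ne_zero 2 hne)]
    linear_combination -hobstr τ hτ
  have hzero : ∀ τ ∈ J, HasDerivAt (fun t => Ψ₂ t - d t / c t * Ψ₁ t) 0 τ := by
    intro τ hτ
    have hne := hcne τ hτ
    refine ((hΨ₂ τ hτ).fun_sub ((hquot τ hτ).fun_mul (hΨ₁ τ hτ))).congr_deriv ?_
    field_simp
    ring
  intro τ₁ h₁ τ₂ h₂
  exact hJopen.is_const_of_deriv_eq_zero hJconn.isPreconnected
    (fun τ hτ => (hzero τ hτ).differentiableAt.differentiableWithinAt)
    (fun τ hτ => (hzero τ hτ).deriv) h₁ h₂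
end

section
/- Let c, d : ℝ → ℝ be smooth functions and let 0 ≤ a < b ≤ 1 be such that c(τ) ≠ 0 for every τ ∈ [a,b], and suppose there exists τ₀ ∈ [a,b] with c(τ₀)³ + c'(τ₀)·d(τ₀) − c(τ₀)·d'(τ₀) ≠ 0. Then for all real numbers α₁ and α₂ there exists a smooth function Ψ : ℝ → ℝ with support contained in the open interval (a,b) such that ∫₀¹ c(τ)·Ψ(τ) dτ = α₁ and ∫₀¹ [ d(τ)·Ψ(τ) + c(τ)·( ∫₀^τ c(s)·Ψ(s) ds ) ] dτ = α₂. -/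
/-!
Both integrals are linear in `Ψ`, so it suffices to find `Ψ₀`, `Ψ₁` supported in `(a,b)` for which
the resulting 2 × 2 system is triangular and invertible.

By continuity the obstruction `c₂ = c³ + c'd − cd'` is nonzero at some interior point `t` of
`[a,b]`. Let `f ≥ 0` be a bump function supported in `(a,b)` with `f t = 1`.

* `Ψ₀ = f c` has first integral `∫ f c² > 0`.
* With `k = f c₂`, the function `Ψ₁ = 2c'k + ck'` satisfies `c Ψ₁ = (c²k)'`. Its first integral
  therefore vanishes, its running integral is `c²k`, and its second integrand is
  `dΨ₁ + c³k = (dck)' + k c₂`, so its second integral is `∫ f c₂² > 0`.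
-/

open MeasureTheory

/-- The first integral of `Ψ₁ = 2c'k + ck'` up to any point `τ`: the integrand is `(c²k)'`. -/
lemma integral_mul_potential {c k : ℝ → ℝ} (hc : ContDiff ℝ (⊤ : ℕ∞) c)
    (hk : ContDiff ℝ (⊤ : ℕ∞) k) (hk0 : k 0 = 0) (τ : ℝ) :
    (∫ s in (0:ℝ)..τ, c s * (2 * deriv c s * k s + c s * deriv k s)) = c τ ^ 2 * k τ := by
  have hc' : Continuous (deriv c) := hc.continuous_deriv (by simp)
  have hk' : Continuous (deriv k) := hk.continuous_deriv (by simp)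
  have hcc := hc.continuous
  have hkc := hk.continuous
  have h := intervalIntegral.integral_eq_sub_of_hasDerivAt (a := 0) (b := τ)
    (f := fun s => c s ^ 2 * k s)
    (f' := fun s => c s * (2 * deriv c s * k s + c s * deriv k s)) ?_
    (Continuous.intervalIntegrable (by fun_prop) _ _)
  · rw [h, hk0]; ring
  · intro s _
    have h1 := (hc.differentiable (by simp) s).hasDerivAt
    have h2 := (hk.differentiable (by simp) s).hasDerivAt
    refine ((h1.fun_pow 2).fun_mul h2).congr_deriv ?_
    push_cast; ring

/-- The second integral of `Ψ₁ = 2c'k + ck'`: the integrand is `(dck)' + k c₂`, and the boundary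
terms vanish. -/
lemma second_integral_potential {c d k : ℝ → ℝ} (hc : ContDiff ℝ (⊤ : ℕ∞) c)
    (hd : ContDiff ℝ (⊤ : ℕ∞) d) (hk : ContDiff ℝ (⊤ : ℕ∞) k) (hk0 : k 0 = 0) (hk1 : k 1 = 0) :
    (∫ τ in (0:ℝ)..1, (d τ * (2 * deriv c τ * k τ + c τ * deriv k τ) +
        c τ * ∫ s in (0:ℝ)..τ, c s * (2 * deriv c s * k s + c s * deriv k s))) =
      ∫ τ in (0:ℝ)..1, k τ * (c τ ^ 3 + deriv c τ * d τ - c τ * deriv d τ) := by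
  have hc' : Continuous (deriv c) := hc.continuous_deriv (by simp)
  have hd' : Continuous (deriv d) := hd.continuous_deriv (by simp)
  have hk' : Continuous (deriv k) := hk.continuous_deriv (by simp)
  have hcc := hc.continuous
  have hdc := hd.continuous
  have hkc := hk.continuous
  simp_rw [integral_mul_potential hc hk hk0]
  rw [← sub_eq_zero, ← intervalIntegral.integral_sub
    (Continuous.intervalIntegrable (by fun_prop) _ _)
    (Continuous.intervalIntegrable (by fun_prop) _ _)]
  rw [intervalIntegral.integral_eq_sub_of_hasDerivAt (f := fun s => d s * c s * k s) ?_
    (Continuous.intervalIntegrable (by fun_prop) _ _)]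
  · simp [hk0, hk1]
  · intro s _
    have h1 := (hc.differentiable (by simp) s).hasDerivAt
    have h2 := (hk.differentiable (by simp) s).hasDerivAt
    have h3 := (hd.differentiable (by simp) s).hasDerivAt
    refine ((h3.fun_mul h1).fun_mul h2).congr_deriv ?_
    ring

/-- The second-order gluing statement of Section 6.1 of the paper (part of Theorem 4): if
`c ≠ 0` on `[a,b] ⊆ [0,1]` and the obstruction `c₂ = c³ + c'·d − c·d'` is nonzero at some
point of `[a,b]`, then both integrals (the changes of the first and second transversal
derivatives) can be prescribed arbitrarily by a smooth `Ψ` supported in `(a,b)`. -/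
theorem second_order_gluing
    (c d : ℝ → ℝ) (hc : ContDiff ℝ (⊤ : ℕ∞) c) (hd : ContDiff ℝ (⊤ : ℕ∞) d)
    (a b : ℝ) (ha : 0 ≤ a) (hab : a < b) (hb : b ≤ 1)
    (hcne : ∀ τ ∈ Set.Icc a b, c τ ≠ 0)
    (hτ₀ : ∃ τ₀ ∈ Set.Icc a b,
      c τ₀ ^ 3 + deriv c τ₀ * d τ₀ - c τ₀ * deriv d τ₀ ≠ 0)
    (α₁ α₂ : ℝ) :
    ∃ Ψ : ℝ → ℝ, ContDiff ℝ (⊤ : ℕ∞) Ψ ∧ Function.support Ψ ⊆ Set.Ioo a b ∧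
      (∫ τ in (0:ℝ)..1, c τ * Ψ τ) = α₁ ∧
      (∫ τ in (0:ℝ)..1,
        (d τ * Ψ τ + c τ * ∫ s in (0:ℝ)..τ, c s * Ψ s)) = α₂ := by
  have hcc := hc.continuous
  have hdc := hd.continuous
  have hcs : ContDiff ℝ (⊤ : ℕ∞) (deriv c) := ((contDiff_infty_iff_deriv (f := c)).1 hc).2
  have hds : ContDiff ℝ (⊤ : ℕ∞) (deriv d) := ((contDiff_infty_iff_deriv (f := d)).1 hd).2
  set c₂ : ℝ → ℝ := fun τ => c τ ^ 3 + deriv c τ * d τ - c τ * deriv d τ with hc₂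
  have hc₂s : ContDiff ℝ (⊤ : ℕ∞) c₂ := by fun_prop
  have hc₂c := hc₂s.continuous
  -- `τ₀` may be an endpoint; continuity moves it into the open interval.
  obtain ⟨t, htab, ht⟩ : ∃ t ∈ Set.Ioo a b, c₂ t ≠ 0 := by
    obtain ⟨τ₀, h, hne⟩ := hτ₀
    rw [← closure_Ioo hab.ne] at h
    obtain ⟨t, h1, h2⟩ := mem_closure_iff.1 h {x | c₂ x ≠ 0} (isOpen_ne_fun hc₂c (by fun_prop)) hne
    exact ⟨t, h2, h1⟩
  obtain ⟨f, hfs, -, hf, hfr, hft⟩ :=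
    exists_contDiff_tsupport_subset (n := (⊤ : ℕ∞)) (isOpen_Ioo.mem_nhds htab)
  have hfc := hf.continuous
  have hf0 : ∀ x, 0 ≤ f x := fun x => (hfr ⟨x, rfl⟩).1
  have hfz : ∀ x, x ∉ Set.Ioo a b → f x = 0 := fun x hx =>
    image_eq_zero_of_notMem_tsupport fun h => hx (hfs h)
  have ht01 : t ∈ Set.Icc (0:ℝ) 1 := ⟨by linarith [htab.1], by linarith [htab.2]⟩
  have hpos : ∀ g : ℝ → ℝ, Continuous g → g t ≠ 0 → 0 < ∫ τ in (0:ℝ)..1, f τ * g τ ^ 2 := by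
    intro g hg hgt
    refine intervalIntegral.integral_pos one_pos (by fun_prop)
      (fun x _ => mul_nonneg (hf0 x) (sq_nonneg _)) ⟨t, ht01, ?_⟩
    rw [hft]; positivity
  have hA := hpos c hcc (hcne t (Set.Ioo_subset_Icc_self htab))
  have hB := hpos c₂ hc₂c ht
  set A := ∫ τ in (0:ℝ)..1, f τ * c τ ^ 2 with hAdef
  set B := ∫ τ in (0:ℝ)..1, f τ * c₂ τ ^ 2 with hBdef
  set k : ℝ → ℝ := fun τ => f τ * c₂ τ with hkdef
  have hk : ContDiff ℝ (⊤ : ℕ∞) k := by fun_prop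
  have hk's : ContDiff ℝ (⊤ : ℕ∞) (deriv k) := ((contDiff_infty_iff_deriv (f := k)).1 hk).2
  have hkt : tsupport k ⊆ Set.Ioo a b := (tsupport_mul_subset_left (f := f) (g := c₂)).trans hfs
  have hk0 : k 0 = 0 := by simp [hkdef, hfz 0 fun h => by linarith [h.1]]
  have hk1 : k 1 = 0 := by simp [hkdef, hfz 1 fun h => by linarith [h.2]]
  set Ψ₁ : ℝ → ℝ := fun τ => 2 * deriv c τ * k τ + c τ * deriv k τ with hΨ₁
  have hΨ₁s : ContDiff ℝ (⊤ : ℕ∞) Ψ₁ := by fun_prop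
  have hΨ₁c := hΨ₁s.continuous
  set Ψ₀ : ℝ → ℝ := fun τ => f τ * c τ with hΨ₀
  have hΨ₀s : ContDiff ℝ (⊤ : ℕ∞) Ψ₀ := by fun_prop
  have hΨ₀c := hΨ₀s.continuous
  have e00 : (∫ τ in (0:ℝ)..1, c τ * Ψ₀ τ) = A := by
    refine intervalIntegral.integral_congr fun x _ => ?_
    simp only [hΨ₀]; ring
  have e01 : (∫ τ in (0:ℝ)..1, c τ * Ψ₁ τ) = 0 := by
    rw [integral_mul_potential hc hk hk0, hk1, mul_zero]
  have e11 : (∫ τ in (0:ℝ)..1, (d τ * Ψ₁ τ + c τ * ∫ s in (0:ℝ)..τ, c s * Ψ₁ s)) = B := by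
    rw [second_integral_potential hc hd hk hk0 hk1]
    refine intervalIntegral.integral_congr fun x _ => ?_
    simp only [hkdef, hc₂]; ring
  set M := ∫ τ in (0:ℝ)..1, (d τ * Ψ₀ τ + c τ * ∫ s in (0:ℝ)..τ, c s * Ψ₀ s) with hM
  have hprim : ∀ g : ℝ → ℝ, Continuous g → Continuous fun τ => ∫ s in (0:ℝ)..τ, c s * g s :=
    fun g hg => intervalIntegral.continuous_primitive
      (fun _ _ => Continuous.intervalIntegrable (by fun_prop) _ _) 0
  have hp0 := hprim Ψ₀ hΨ₀c
  have hp1 := hprim Ψ₁ hΨ₁c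
  have hlin : ∀ p q τ : ℝ, (∫ s in (0:ℝ)..τ, c s * (p * Ψ₀ s + q * Ψ₁ s)) =
      p * (∫ s in (0:ℝ)..τ, c s * Ψ₀ s) + q * ∫ s in (0:ℝ)..τ, c s * Ψ₁ s := by
    intro p q τ
    rw [← intervalIntegral.integral_const_mul, ← intervalIntegral.integral_const_mul,
      ← intervalIntegral.integral_add (Continuous.intervalIntegrable (by fun_prop) _ _)
        (Continuous.intervalIntegrable (by fun_prop) _ _)]
    exact intervalIntegral.integral_congr fun x _ => by ring
  refine ⟨fun τ => α₁ / A * Ψ₀ τ + (α₂ - α₁ / A * M) / B * Ψ₁ τ, by fun_prop, ?_, ?_, ?_⟩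
  · intro x hx
    by_contra hxn
    have h1 : k x = 0 := by simp [hkdef, hfz x hxn]
    have h2 : deriv k x = 0 := by
      by_contra h
      exact hxn (hkt (support_deriv_subset h))
    exact hx (by simp [hΨ₀, hΨ₁, hfz x hxn, h1, h2])
  · rw [hlin, e00, e01]
    field_simp
    ring
  · simp_rw [hlin]
    have : ∀ p q : ℝ, (∫ τ in (0:ℝ)..1, (d τ * (p * Ψ₀ τ + q * Ψ₁ τ) +
        c τ * (p * (∫ s in (0:ℝ)..τ, c s * Ψ₀ s) + q * ∫ s in (0:ℝ)..τ, c s * Ψ₁ s))) =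
        p * M + q * B := by
      intro p q
      rw [hM, ← e11, ← intervalIntegral.integral_const_mul,
        ← intervalIntegral.integral_const_mul,
        ← intervalIntegral.integral_add (Continuous.intervalIntegrable (by fun_prop) _ _)
          (Continuous.intervalIntegrable (by fun_prop) _ _)]
      exact intervalIntegral.integral_congr fun x _ => by ring
    rw [this]
    field_simp
    ring
end
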